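/- arXiv:2209.10400 — 2 statements merged into one kernel-verified Lean document; each statement's English description precedes it below -/
import Mathlib

section
/- Let T be a finite tree rooted at r and let p ≥ 2·h(T). In every optimal solution 𝓘 of the Min-Distance problem (a feasible covering minimizing the total cost Σ_{I∈𝓘} C(I)), every leaf of T belongs to the vertex set of exactly one immersion of 𝓘. -/
open SimpleGraph Finset

/-- Cost of a subgraph-immersion: twice the number of its edges. -/
noncomputable def immCost {V : Type*} {G : SimpleGraph V} (I : G.Subgraph) : ℕ :=
  2 * I.edgeSet.ncard

/-- An immersion is a connected subgraph of `G` containing the root `r`. -/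
def IsImmersion {V : Type*} {G : SimpleGraph V} (r : V) (I : G.Subgraph) : Prop :=
  I.Connected ∧ r ∈ I.verts

/-- Height of the rooted tree: maximum distance from the root. -/
noncomputable def treeHeight {V : Type*} [Fintype V] (G : SimpleGraph V) (r : V) : ℕ :=
  Finset.univ.sup (fun v => G.dist r v)

/-- A leaf of the rooted tree: a vertex `v ≠ r` of degree 1. -/
def IsTreeLeaf {V : Type*} (G : SimpleGraph V) (r v : V) : Prop :=
  v ≠ r ∧ (G.neighborSet v).ncard = 1

/-- A leaf of an immersion `I`: a vertex `v ≠ r` of degree 1 in `I`. -/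
def IsImmLeaf {V : Type*} {G : SimpleGraph V} (r : V) (I : G.Subgraph) (v : V) : Prop :=
  v ≠ r ∧ (I.neighborSet v).ncard = 1

/-- A feasible covering: a finite set of immersions, each of cost at most `p`,
whose vertex sets cover all vertices. -/
def IsFeasible {V : Type*} [Fintype V] {G : SimpleGraph V} (r : V) (p : ℕ)
    (𝓘 : Finset G.Subgraph) : Prop :=
  (∀ I ∈ 𝓘, IsImmersion r I ∧ immCost I ≤ p) ∧ (∀ v : V, ∃ I ∈ 𝓘, v ∈ I.verts)

/-- Total cost of a set of immersions. -/
noncomputable def totalCost {V : Type*} {G : SimpleGraph V} (𝓘 : Finset G.Subgraph) : ℕ :=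
  ∑ I ∈ 𝓘, immCost I

/-- Optimality for the Min-Distance problem. -/
def MinDistOptimal {V : Type*} [Fintype V] {G : SimpleGraph V} (r : V) (p : ℕ)
    (𝓘 : Finset G.Subgraph) : Prop :=
  IsFeasible r p 𝓘 ∧ ∀ 𝓙 : Finset G.Subgraph, IsFeasible r p 𝓙 → totalCost 𝓘 ≤ totalCost 𝓙

/-- Makespan (maximum collective time) of an assignment `a` of immersions to `k` robots. -/
noncomputable def makespan {V : Type*} {G : SimpleGraph V} (k : ℕ)
    (𝓘 : Finset G.Subgraph) (a : G.Subgraph → Fin k) : ℕ :=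
  Finset.univ.sup (fun i : Fin k => ∑ I ∈ 𝓘.filter (fun I => a I = i), immCost I)

/-- Optimality for the Min-Time problem with `k` robots. -/
def MinTimeOptimal {V : Type*} [Fintype V] {G : SimpleGraph V} (r : V) (p k : ℕ)
    (𝓘 : Finset G.Subgraph) (a : G.Subgraph → Fin k) : Prop :=
  IsFeasible r p 𝓘 ∧ ∀ (𝓙 : Finset G.Subgraph) (b : G.Subgraph → Fin k),
    IsFeasible r p 𝓙 → makespan k 𝓘 a ≤ makespan k 𝓙 b

/-- Optimality for the Min-Immersions problem. -/
def MinImmOptimal {V : Type*} [Fintype V] {G : SimpleGraph V} (r : V) (p : ℕ)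
    (𝓘 : Finset G.Subgraph) : Prop :=
  IsFeasible r p 𝓘 ∧ ∀ 𝓙 : Finset G.Subgraph, IsFeasible r p 𝓙 → 𝓘.card ≤ 𝓙.card

/-!
Exchange argument. If two members `I ≠ J` of an optimal covering both contained a leaf `l`, then `J`
could be traded for `J - l`. Deleting a vertex of degree one keeps `J` connected, the root survives
because `l ≠ r`, and `l` stays covered by `I`, so the new family is feasible. Since `J` joins `l` to
`r`, an edge at `l` is lost, and the total cost drops.
-/

section DeleteVerts

variable {V : Type*} {G : SimpleGraph V} {H : G.Subgraph} {s : Set V}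

lemma preconnected_deleteVerts_of_subsingleton_neighborSet (hH : H.Preconnected)
    (hs : ∀ v ∈ s, (H.neighborSet v).Subsingleton) : (H.deleteVerts s).Preconnected := by
  have hcoe : ∀ v ∉ {v : H.verts | ↑v ∉ s}, (H.coe.neighborSet v).Subsingleton :=
    fun v hv _ hx _ hy => Subtype.ext (hs v (not_not.mp hv) hx hy)
  exact ⟨H.coeDeleteVertsIso s |>.preconnected_iff.mpr (hH.coe.induce_of_degree_eq_one hcoe)⟩

lemma edgeSet_deleteVerts_ssubset_of_adj {v w : V} (hv : v ∈ s) (hvw : H.Adj v w) :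
    (H.deleteVerts s).edgeSet ⊂ H.edgeSet :=
  Set.ssubset_iff_exists.mpr ⟨Subgraph.edgeSet_mono Subgraph.deleteVerts_le, s(v, w), hvw,
    fun h => (Subgraph.deleteVerts_adj.mp h).2.1 hv⟩

lemma immCost_deleteVerts_lt {v : V} (hfin : H.edgeSet.Finite) (hH : H.Preconnected)
    (hnontriv : H.verts.Nontrivial) (hvH : v ∈ H.verts) (hvs : v ∈ s) :
    immCost (H.deleteVerts s) < immCost H := by
  have : Nontrivial H.verts := hnontriv.coe_sort
  obtain ⟨w, hvw⟩ := hH.exists_adj_of_nontrivial ⟨v, hvH⟩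
  exact Nat.mul_lt_mul_of_pos_left
    (Set.ncard_lt_ncard (edgeSet_deleteVerts_ssubset_of_adj hvs hvw) hfin) two_pos

lemma IsImmersion.deleteVerts_of_subsingleton_neighborSet {r : V} (hH : IsImmersion r H)
    (hr : r ∉ s) (hs : ∀ v ∈ s, (H.neighborSet v).Subsingleton) :
    IsImmersion r (H.deleteVerts s) :=
  have hr' : r ∈ (H.deleteVerts s).verts := ⟨hH.2, hr⟩
  have hpre := preconnected_deleteVerts_of_subsingleton_neighborSet hH.1.preconnected hs
  ⟨Subgraph.connected_iff.mpr ⟨hpre, r, hr'⟩, hr'⟩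

lemma IsTreeLeaf.subsingleton_neighborSet {r l : V} (hl : IsTreeLeaf G r l) :
    (G.neighborSet l).Subsingleton := by
  obtain ⟨a, ha⟩ := Set.ncard_eq_one.mp hl.2
  exact ha ▸ Set.subsingleton_singleton

end DeleteVerts

section Exchange

variable {V : Type*} {G : SimpleGraph V} {𝓘 : Finset G.Subgraph} {J J' : G.Subgraph}

lemma totalCost_insert_erase_lt [DecidableEq G.Subgraph] (hJ : J ∈ 𝓘)
    (hcost : immCost J' < immCost J) : totalCost (insert J' (𝓘.erase J)) < totalCost 𝓘 := by
  calc totalCost (insert J' (𝓘.erase J))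
      ≤ immCost J' + totalCost (𝓘.erase J) := by
        -- `J'` may already belong to the family, in which case inserting it adds no cost.
        by_cases hJ' : J' ∈ 𝓘.erase J
        · exact (congrArg totalCost (insert_eq_of_mem hJ')).trans_le (Nat.le_add_left _ _)
        · exact (sum_insert hJ').le
    _ < immCost J + totalCost (𝓘.erase J) := Nat.add_lt_add_right hcost _
    _ = totalCost 𝓘 := add_sum_erase 𝓘 immCost hJ

variable [Fintype V] {r : V} {p : ℕ}

lemma IsFeasible.insert_erase [DecidableEq G.Subgraph] (h𝓘 : IsFeasible r p 𝓘)
    (hJ' : IsImmersion r J') (hcost : immCost J' ≤ p)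
    (hcover : ∀ v ∈ J.verts, v ∉ J'.verts → ∃ I ∈ 𝓘, I ≠ J ∧ v ∈ I.verts) :
    IsFeasible r p (insert J' (𝓘.erase J)) := by
  refine ⟨forall_mem_insert _ _ _ |>.mpr
    ⟨⟨hJ', hcost⟩, fun I hI => h𝓘.1 I (mem_of_mem_erase hI)⟩, fun v => ?_⟩
  by_cases hv : v ∈ J'.verts
  · exact ⟨J', mem_insert_self _ _, hv⟩
  obtain ⟨I, hI, hIJ, hvI⟩ : ∃ I ∈ 𝓘, I ≠ J ∧ v ∈ I.verts := by
    obtain ⟨I, hI, hvI⟩ := h𝓘.2 v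
    by_cases hIJ : I = J
    · exact hcover v (hIJ ▸ hvI) hv
    · exact ⟨I, hI, hIJ, hvI⟩
  exact ⟨I, mem_insert_of_mem (mem_erase.mpr ⟨hIJ, hI⟩), hvI⟩

lemma MinDistOptimal.immCost_le_of_exchange (hopt : MinDistOptimal r p 𝓘) (hJ : J ∈ 𝓘)
    (hJ' : IsImmersion r J')
    (hcover : ∀ v ∈ J.verts, v ∉ J'.verts → ∃ I ∈ 𝓘, I ≠ J ∧ v ∈ I.verts) :
    immCost J ≤ immCost J' := by
  classical
  by_contra! hcost
  have hfeas := hopt.1.insert_erase hJ' (hcost.le.trans (hopt.1.1 J hJ).2) hcover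
  exact (totalCost_insert_erase_lt hJ hcost).not_ge (hopt.2 _ hfeas)

end Exchange

theorem stmt_3_general {V : Type*} [Fintype V] (G : SimpleGraph V) (r : V) (p : ℕ)
    (𝓘 : Finset G.Subgraph) (hopt : MinDistOptimal r p 𝓘) :
    ∀ l : V, IsTreeLeaf G r l → ∃! I : G.Subgraph, I ∈ 𝓘 ∧ l ∈ I.verts := by
  intro l hl
  obtain ⟨I, hI, hlI⟩ := hopt.1.2 l
  refine ⟨I, ⟨hI, hlI⟩, fun J ⟨hJ, hlJ⟩ => ?_⟩
  by_contra hJI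
  have himm : IsImmersion r J := (hopt.1.1 J hJ).1
  have himm' : IsImmersion r (J.deleteVerts {l}) := by
    refine himm.deleteVerts_of_subsingleton_neighborSet hl.1.symm ?_
    rintro _ rfl
    exact hl.subsingleton_neighborSet.anti (J.neighborSet_subset _)
  have hlt : immCost (J.deleteVerts {l}) < immCost J :=
    immCost_deleteVerts_lt J.edgeSet.toFinite himm.1.preconnected
      ⟨l, hlJ, r, himm.2, hl.1⟩ hlJ rfl
  have hle : immCost J ≤ immCost (J.deleteVerts {l}) := by
    refine hopt.immCost_le_of_exchange hJ himm' fun v hvJ hv => ?_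
    obtain rfl : v = l := not_not.mp fun hvl => hv ⟨hvJ, hvl⟩
    exact ⟨I, hI, Ne.symm hJI, hlI⟩
  exact hlt.not_ge hle

theorem stmt_3 {V : Type*} [Fintype V] (T : SimpleGraph V) (r : V) (p : ℕ)
    (hT : T.IsTree) (hp : 2 * treeHeight T r ≤ p)
    (𝓘 : Finset T.Subgraph) (hopt : MinDistOptimal r p 𝓘) :
    ∀ l : V, IsTreeLeaf T r l → ∃! I : T.Subgraph, I ∈ 𝓘 ∧ l ∈ I.verts :=
  stmt_3_general T r p 𝓘 hopt
end

section
/- Let T be a finite tree rooted at r with at least one edge and let p ≥ 2·h(T). There exists an optimal solution 𝓘 of the Min-Immersions problem (a feasible covering minimizing the number of immersions |𝓘|) such that the leaf sets of the immersions of 𝓘 form a partition of the set of leaves of T, i.e. every leaf of every immersion I ∈ 𝓘 is a leaf of T and every leaf of T is a leaf of exactly one immersion of 𝓘. -/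
open SimpleGraph Finset

/-!
Take a feasible covering with the fewest immersions, assign each leaf of the tree to one immersion
containing it, and shrink every immersion to the union of the root paths to the leaves assigned to
it. A connected subgraph of a tree contains the paths between its vertices, so the shrunk immersion
lies in the original one and costs no more. Every root path extends to a path ending at a leaf, so
all vertices remain covered. Finally, an interior vertex of a path has degree at least two, so the
only leaves of a union of root paths are ends of these paths: they are the leaves of the tree
assigned to the immersion.
-/

section

variable {V : Type*} {G : SimpleGraph V} {r v w : V}

section Immersion

variable {I J : G.Subgraph}

theorem immCost_mono (hIJ : I ≤ J) (hJ : J.edgeSet.Finite) : immCost I ≤ immCost J :=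
  Nat.mul_le_mul_left 2 (Set.ncard_le_ncard (Subgraph.edgeSet_mono hIJ) hJ)

theorem immCost_toSubgraph_le (q : G.Walk v w) : immCost q.toSubgraph ≤ 2 * q.length := by
  classical
  rw [immCost, Walk.edgeSet_toSubgraph, ← Walk.coe_edges_toFinset, Set.ncard_coe_finset,
    ← Walk.length_edges]
  exact Nat.mul_le_mul_left 2 (List.toFinset_card_le _)

theorem isImmersion_toSubgraph (q : G.Walk r v) : IsImmersion r q.toSubgraph :=
  ⟨q.toSubgraph_connected, q.start_mem_verts_toSubgraph⟩

theorem isImmersion_biSup {ι : Type*} {s : Set ι} (hs : s.Nonempty) {I : ι → G.Subgraph}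
    (hI : ∀ i ∈ s, IsImmersion r (I i)) : IsImmersion r (⨆ i ∈ s, I i) := by
  have hr : r ∈ (⨆ i ∈ s, I i).verts := by
    obtain ⟨i, hi⟩ := hs
    exact (le_iSup₂ (f := fun i _ => I i) i hi).1 (hI i hi).2
  have walk_from_root : ∀ v ∈ (⨆ i ∈ s, I i).verts,
      ∃ q : G.Walk r v, q.toSubgraph ≤ ⨆ i ∈ s, I i := by
    intro v hv
    simp only [Subgraph.verts_iSup, Set.mem_iUnion] at hv
    obtain ⟨i, hi, hvi⟩ := hv
    obtain ⟨q, hq⟩ := ((I i).connected_iff_forall_exists_walk_subgraph.1 (hI i hi).1).2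
      (hI i hi).2 hvi
    exact ⟨q, le_iSup₂_of_le i hi hq⟩
  refine ⟨(Subgraph.connected_iff_forall_exists_walk_subgraph _).2 ⟨⟨r, hr⟩, ?_⟩, hr⟩
  intro u v hu hv
  obtain ⟨a, ha⟩ := walk_from_root u hu
  obtain ⟨b, hb⟩ := walk_from_root v hv
  refine ⟨a.reverse.append b, ?_⟩
  rw [Walk.toSubgraph_append, Walk.toSubgraph_reverse]
  exact sup_le ha hb

theorem isImmLeaf_top_iff : IsImmLeaf r (⊤ : G.Subgraph) v ↔ IsTreeLeaf G r v := by
  rw [IsImmLeaf, IsTreeLeaf, Subgraph.neighborSet_top]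

theorem IsImmLeaf.of_le (hv : IsImmLeaf r J v) (hIJ : I ≤ J) (hI : IsImmersion r I)
    (hvI : v ∈ I.verts) : IsImmLeaf r I v := by
  have : Nontrivial I.verts := ⟨⟨v, hvI⟩, ⟨r, hI.2⟩, fun h => hv.1 (congrArg Subtype.val h)⟩
  obtain ⟨u, hu⟩ := hI.1.preconnected.exists_adj_of_nontrivial ⟨v, hvI⟩
  obtain ⟨w, hw⟩ := Set.ncard_eq_one.1 hv.2
  have hsub : I.neighborSet v ⊆ {w} := hw ▸ Subgraph.neighborSet_subset_of_subgraph hIJ v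
  refine ⟨hv.1, Set.ncard_eq_one.2 ⟨w, hsub.antisymm ?_⟩⟩
  rw [Set.singleton_subset_iff, ← hsub hu]
  exact hu

theorem IsImmLeaf.eq_of_isPath {q : G.Walk r w} (hq : q.IsPath)
    (hv : IsImmLeaf r q.toSubgraph v) (hvq : v ∈ q.support) : v = w := by
  obtain ⟨i, rfl, hi⟩ := Walk.mem_support_iff_exists_getVert.1 hvq
  by_contra hne
  have hi₀ : i ≠ 0 := fun h => hv.1 (h ▸ q.getVert_zero)
  have hi₁ : i < q.length := hi.lt_of_ne fun h => hne (h ▸ q.getVert_length)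
  exact absurd (hv.2.symm.trans (hq.ncard_neighborSet_toSubgraph_internal_eq_two hi₀ hi₁))
    (by decide)

theorem toSubgraph_le_of_preconnected (hG : G.IsAcyclic) (hI : I.Preconnected)
    (hv : v ∈ I.verts) (hw : w ∈ I.verts) {q : G.Walk v w} (hq : q.IsPath) :
    q.toSubgraph ≤ I := by
  classical
  obtain ⟨a, ha⟩ := I.preconnected_iff_forall_exists_walk_subgraph.1 hI hv hw
  have hqa : q = a.bypass :=
    Subtype.mk.inj ((hG.subsingleton_path v w).elim ⟨q, hq⟩ ⟨_, a.bypass_isPath⟩)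
  exact hqa ▸ Walk.toSubgraph_bypass_le_toSubgraph.trans ha

end Immersion

section Optimal

variable [Fintype V] {p : ℕ}

theorem exists_isFeasible (hG : G.Connected) (hp : 2 * treeHeight G r ≤ p) :
    ∃ 𝓘 : Finset G.Subgraph, IsFeasible r p 𝓘 := by
  classical
  choose P hP using fun v => hG.exists_walk_length_eq_dist r v
  refine ⟨univ.image fun v => (P v).toSubgraph, ?_, fun v =>
    ⟨_, mem_image_of_mem _ (mem_univ v), (P v).end_mem_verts_toSubgraph⟩⟩
  intro I hI
  obtain ⟨v, -, rfl⟩ := mem_image.1 hI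
  refine ⟨isImmersion_toSubgraph (P v), ?_⟩
  calc immCost (P v).toSubgraph ≤ 2 * G.dist r v := hP v ▸ immCost_toSubgraph_le (P v)
    _ ≤ 2 * treeHeight G r := Nat.mul_le_mul_left 2 (le_sup (f := G.dist r) (mem_univ v))
    _ ≤ p := hp

theorem exists_minImmOptimal (hG : G.Connected) (hp : 2 * treeHeight G r ≤ p) :
    ∃ 𝓘 : Finset G.Subgraph, MinImmOptimal r p 𝓘 := by
  obtain ⟨𝓘, h𝓘, hmin⟩ :=
    exists_minimalFor_of_wellFoundedLT (IsFeasible r p) card (exists_isFeasible hG hp)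
  exact ⟨𝓘, h𝓘, fun 𝓙 h𝓙 => (le_total 𝓘.card 𝓙.card).elim id (hmin h𝓙)⟩

end Optimal

theorem exists_isPath_append_isTreeLeaf [Finite V] (hG : G.IsAcyclic) {v : V}
    {q : G.Walk r v} (hq : q.IsPath) (hv : v ≠ r) :
    ∃ (l : V) (q' : G.Walk v l), (q.append q').IsPath ∧ IsTreeLeaf G r l := by
  have hpen : G.Adj v q.penultimate := (q.adj_penultimate (Walk.not_nil_of_ne hv.symm)).symm
  by_cases hleaf : ∀ w, G.Adj v w → w = q.penultimate
  · refine ⟨v, Walk.nil, by rwa [Walk.append_nil], hv, Set.ncard_eq_one.2 ⟨q.penultimate, ?_⟩⟩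
    exact Set.eq_singleton_iff_unique_mem.2 ⟨hpen, hleaf⟩
  · push Not at hleaf
    obtain ⟨w, hvw, hw⟩ := hleaf
    have hwq : w ∉ q.support := fun h => hw (hG.eq_penultimate_of_adj_end hq hvw h)
    have hwr : w ≠ r := fun h => hwq (h ▸ q.start_mem_support)
    obtain ⟨l, q', hq', hl⟩ := exists_isPath_append_isTreeLeaf hG (hq.concat hwq hvw) hwr
    exact ⟨l, Walk.cons hvw q', by rwa [← Walk.concat_append], hl⟩
termination_by Nat.card V - q.length
decreasing_by
  have := Fintype.ofFinite V
  have hlt : q.length < Fintype.card V := hq.length_lt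
  rw [Walk.length_concat, Nat.card_eq_fintype_card]
  omega

section RootHull

variable {P : ∀ v, G.Walk r v} {L : Set V}

/-- The subgraph spanned by the root `r` and the vertices in `L`: the union of the given walks `P l`
from `r` to the vertices `l` of `insert r L`. Including `r` makes it an immersion even if `L` is
empty. -/
def rootHull (P : ∀ v, G.Walk r v) (L : Set V) : G.Subgraph :=
  ⨆ l ∈ insert r L, (P l).toSubgraph

theorem mem_verts_rootHull :
    v ∈ (rootHull P L).verts ↔ ∃ l ∈ insert r L, v ∈ (P l).support := by
  simp only [rootHull, Subgraph.verts_iSup, Set.mem_iUnion, Walk.mem_verts_toSubgraph, exists_prop]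

theorem isImmersion_rootHull (P : ∀ v, G.Walk r v) (L : Set V) : IsImmersion r (rootHull P L) :=
  isImmersion_biSup (Set.insert_nonempty r L) fun l _ => isImmersion_toSubgraph (P l)

theorem rootHull_le (hG : G.IsAcyclic) (hP : ∀ v, (P v).IsPath) {I : G.Subgraph}
    (hI : IsImmersion r I) (hL : L ⊆ I.verts) : rootHull P L ≤ I :=
  iSup₂_le fun l hl => toSubgraph_le_of_preconnected hG hI.1.preconnected hI.2
    (Set.insert_subset hI.2 hL hl) (hP l)

theorem isImmLeaf_rootHull_iff (hP : ∀ v, (P v).IsPath) (hL : ∀ l ∈ L, IsTreeLeaf G r l) :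
    IsImmLeaf r (rootHull P L) v ↔ v ∈ L := by
  constructor
  · intro hv
    obtain ⟨w, hw⟩ := Set.ncard_eq_one.1 hv.2
    have hvw : (rootHull P L).Adj v w := hw.ge rfl
    obtain ⟨l, hl, hvl⟩ := mem_verts_rootHull.1 hvw.fst_mem
    have hPl : (P l).toSubgraph ≤ rootHull P L := le_iSup₂_of_le l hl le_rfl
    obtain rfl : v = l := (hv.of_le hPl (isImmersion_toSubgraph (P l))
      ((P l).mem_verts_toSubgraph.2 hvl)).eq_of_isPath (hP l) hvl
    exact hl.resolve_left hv.1
  · intro hv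
    exact (isImmLeaf_top_iff.2 (hL v hv)).of_le le_top (isImmersion_rootHull P L)
      (mem_verts_rootHull.2 ⟨v, Or.inr hv, (P v).end_mem_support⟩)

theorem exists_isTreeLeaf_mem_support [Finite V] (hG : G.IsAcyclic) (hP : ∀ v, (P v).IsPath)
    (hv : v ≠ r) : ∃ l, IsTreeLeaf G r l ∧ v ∈ (P l).support := by
  obtain ⟨l, q, hq, hl⟩ := exists_isPath_append_isTreeLeaf hG (hP v) hv
  refine ⟨l, hl, ?_⟩
  have hPl : P l = (P v).append q :=
    Subtype.mk.inj ((hG.subsingleton_path r l).elim ⟨P l, hP l⟩ ⟨_, hq⟩)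
  rw [hPl]
  exact Walk.support_subset_support_append_left _ _ (P v).end_mem_support

end RootHull

/-- The leaf sets of the members of `𝓘` partition the leaves of the graph rooted at `r`. -/
def IsLeafPartition (r : V) (𝓘 : Finset G.Subgraph) : Prop :=
  (∀ I ∈ 𝓘, ∀ v, IsImmLeaf r I v → IsTreeLeaf G r v) ∧
    ∀ l, IsTreeLeaf G r l → ∃! I, I ∈ 𝓘 ∧ IsImmLeaf r I l

section Prune

variable {P : ∀ v, G.Walk r v} {f : V → G.Subgraph} {I : G.Subgraph} {𝓘 : Finset G.Subgraph}

/-- The part of an immersion `I` that is needed to reach, along the walks `P`, the leaves that the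
assignment `f` of immersions to vertices gives to `I`. -/
def prune (P : ∀ v, G.Walk r v) (f : V → G.Subgraph) (I : G.Subgraph) : G.Subgraph :=
  rootHull P {l | IsTreeLeaf G r l ∧ f l = I}

theorem prune_le (hG : G.IsAcyclic) (hP : ∀ v, (P v).IsPath) (hI : IsImmersion r I)
    (hf : ∀ v, v ∈ (f v).verts) : prune P f I ≤ I :=
  rootHull_le hG hP hI fun l hl => hl.2 ▸ hf l

theorem isImmLeaf_prune_iff (hP : ∀ v, (P v).IsPath) :
    IsImmLeaf r (prune P f I) v ↔ IsTreeLeaf G r v ∧ f v = I :=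
  isImmLeaf_rootHull_iff hP fun _ hl => hl.1

theorem exists_mem_verts_prune [Finite V] (hG : G.IsAcyclic) (hP : ∀ v, (P v).IsPath)
    (f : V → G.Subgraph) (v : V) : ∃ l, v ∈ (prune P f (f l)).verts := by
  obtain rfl | hv := eq_or_ne v r
  · exact ⟨v, (isImmersion_rootHull P _).2⟩
  · obtain ⟨l, hl, hvl⟩ := exists_isTreeLeaf_mem_support hG hP hv
    exact ⟨l, mem_verts_rootHull.2 ⟨l, Or.inr ⟨hl, rfl⟩, hvl⟩⟩

theorem IsFeasible.image_prune [Fintype V] [DecidableEq G.Subgraph] {p : ℕ} (hG : G.IsAcyclic)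
    (hP : ∀ v, (P v).IsPath) (h𝓘 : IsFeasible r p 𝓘) (hf𝓘 : ∀ v, f v ∈ 𝓘)
    (hf : ∀ v, v ∈ (f v).verts) : IsFeasible r p (𝓘.image (prune P f)) := by
  refine ⟨forall_mem_image.2 fun I hI => ⟨isImmersion_rootHull P _, ?_⟩, fun v => ?_⟩
  · obtain ⟨himm, hcost⟩ := h𝓘.1 I hI
    exact (immCost_mono (prune_le hG hP himm hf) (Set.toFinite _)).trans hcost
  · obtain ⟨l, hl⟩ := exists_mem_verts_prune hG hP f v
    exact ⟨_, mem_image_of_mem _ (hf𝓘 l), hl⟩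

theorem isLeafPartition_image_prune [DecidableEq G.Subgraph] (hP : ∀ v, (P v).IsPath)
    (hf𝓘 : ∀ l, IsTreeLeaf G r l → f l ∈ 𝓘) : IsLeafPartition r (𝓘.image (prune P f)) := by
  refine ⟨forall_mem_image.2 fun I _ v hv => ((isImmLeaf_prune_iff hP).1 hv).1, fun l hl =>
    ⟨prune P f (f l), ⟨mem_image_of_mem _ (hf𝓘 l hl), (isImmLeaf_prune_iff hP).2 ⟨hl, rfl⟩⟩, ?_⟩⟩
  rintro K ⟨hK, hKl⟩
  obtain ⟨I, -, rfl⟩ := mem_image.1 hK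
  rw [((isImmLeaf_prune_iff hP).1 hKl).2]

theorem IsFeasible.exists_isLeafPartition [Fintype V] {p : ℕ} (hG : G.IsTree)
    (h𝓘 : IsFeasible r p 𝓘) :
    ∃ 𝓙 : Finset G.Subgraph, IsFeasible r p 𝓙 ∧ 𝓙.card ≤ 𝓘.card ∧ IsLeafPartition r 𝓙 := by
  classical
  choose P hP using fun v => (hG.connected r v).exists_isPath
  choose f hf𝓘 hf using h𝓘.2
  exact ⟨𝓘.image (prune P f), h𝓘.image_prune hG.isAcyclic hP hf𝓘 hf, card_image_le,
    isLeafPartition_image_prune hP fun l _ => hf𝓘 l⟩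

end Prune

end

theorem stmt_8 {V : Type*} [Fintype V] (T : SimpleGraph V) (r : V) (p : ℕ)
    (hT : T.IsTree) (hE : T.edgeSet.Nonempty) (hp : 2 * treeHeight T r ≤ p) :
    ∃ 𝓘 : Finset T.Subgraph, MinImmOptimal r p 𝓘 ∧
      (∀ I ∈ 𝓘, ∀ v : V, IsImmLeaf r I v → IsTreeLeaf T r v) ∧
      (∀ l : V, IsTreeLeaf T r l → ∃! I : T.Subgraph, I ∈ 𝓘 ∧ IsImmLeaf r I l) := by
  obtain ⟨𝓘, h𝓘, hmin⟩ := exists_minImmOptimal hT.connected hp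
  obtain ⟨𝓙, h𝓙, hcard, hpart⟩ := h𝓘.exists_isLeafPartition hT
  exact ⟨𝓙, ⟨h𝓙, fun 𝓚 h𝓚 => hcard.trans (hmin 𝓚 h𝓚)⟩, hpart⟩
end
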